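/- Let Λ = ℤ ⊕ U³ ⊕ ℤ be the Mukai lattice with Mukai pairing ((r,α,s),(r',α',s')) = (α,α') − rs' − r's, and let {e,f} be a standard basis of a fixed hyperbolic summand of U³, so U³ = ⟨e,f⟩ ⊕ U². The orthogonal complement (1,0,−1)^⊥ in Λ equals U³ ⊕ ℤ(1,0,1). Let φ : (1,0,−1)^⊥ → (0,e+f,1)^⊥ be the map φ((r, ae+bf+α, r)) = (−a, re−(r+a)f+α, r+b) for α ∈ U³ orthogonal to e and f; φ is an isometry. Let G be the subgroup of O((1,0,−1)^⊥) generated by: (i) the restrictions to (1,0,−1)^⊥ of all isometries of Λ acting as an element of SO^+(U³) on U³ and as the identity on ℤ ⊕ ℤ (the H⁰ and H⁴ summands); and (ii) all compositions φ^{-1} ∘ ĝ ∘ φ, where ĝ is the restriction to (0,e+f,1)^⊥ of an isometry of Λ acting as an element of SO^+(U³) fixing e+f on U³ and as the identity on ℤ ⊕ ℤ. Then SO^+((1,0,−1)^⊥) ⊆ G. -/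

import Mathlib

open Matrix

/-- The ℝ-bilinear extension of the integral bilinear form with Gram matrix `M`. -/
def bilinR {ι : Type*} [Fintype ι] (M : Matrix ι ι ℤ) (x y : ι → ℝ) : ℝ :=
  x ⬝ᵥ ((M.map (Int.cast : ℤ → ℝ)) *ᵥ y)

/-- `w` is a tuple of vectors of `L ⊗ ℝ` spanning a maximal positive definite subspace:
its Gram matrix is positive definite and no longer tuple has positive definite Gram matrix. -/
def IsMaxPosTuple {ι : Type*} [Fintype ι] (M : Matrix ι ι ℤ) {k : ℕ}
    (w : Fin k → ι → ℝ) : Prop :=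
  (Matrix.of fun i j => bilinR M (w i) (w j)).PosDef ∧
    ∀ w' : Fin (k + 1) → ι → ℝ,
      ¬ (Matrix.of fun i j => bilinR M (w' i) (w' j)).PosDef

/-- `g` preserves the orientation of the positive cone of the lattice with Gram matrix `M`:
for every basis `w` of a maximal positive definite subspace `W` of `L ⊗ ℝ`, the determinant of
the matrix `(B(wᵢ, g wⱼ))` (which equals, up to the positive factor `det (Gram w)`, the
determinant of the orthogonal projection of `g|_W` back to `W`) is positive. -/
def OrientPres {ι : Type*} [Fintype ι] (M : Matrix ι ι ℤ) (g : Matrix ι ι ℤ) : Prop :=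
  ∀ (k : ℕ) (w : Fin k → ι → ℝ), IsMaxPosTuple M w →
    0 < (Matrix.of fun i j : Fin k =>
          bilinR M (w i) ((g.map (Int.cast : ℤ → ℝ)) *ᵥ w j)).det

/-- `g` is an isometry of the lattice with Gram matrix `M`. -/
def IsIsometry {ι : Type*} [Fintype ι] (M : Matrix ι ι ℤ) (g : Matrix ι ι ℤ) : Prop :=
  gᵀ * M * g = M

/-- A vector of a lattice is primitive if it is divisible only by units. -/
def IsPrimitiveVec {ι : Type*} (l : ι → ℤ) : Prop :=
  ∀ (c : ℤ) (x : ι → ℤ), l = c • x → IsUnit c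

/-- The Gram matrix of `U³` in the standard basis `e₁, f₁, e₂, f₂, e₃, f₃`
(with `e := e₁`, `f := f₁` the fixed hyperbolic summand). -/
def U3G : Matrix (Fin 6) (Fin 6) ℤ :=
  !![0,1,0,0,0,0;
     1,0,0,0,0,0;
     0,0,0,1,0,0;
     0,0,1,0,0,0;
     0,0,0,0,0,1;
     0,0,0,0,1,0]

/-- The Gram matrix of `K := (1,0,-1)^⊥ = U³ ⊕ ℤ(1,0,1)` inside the Mukai lattice
`Λ = ℤ ⊕ U³ ⊕ ℤ`, in the basis `b₀,…,b₅ = e₁,f₁,e₂,f₂,e₃,f₃` and `b₆ = (1,0,1)`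
(of square `-2`). -/
def G7 : Matrix (Fin 7) (Fin 7) ℤ :=
  !![0,1,0,0,0,0,0;
     1,0,0,0,0,0,0;
     0,0,0,1,0,0,0;
     0,0,1,0,0,0,0;
     0,0,0,0,0,1,0;
     0,0,0,0,1,0,0;
     0,0,0,0,0,0,-2]

/-- The isometry of the Mukai lattice `Λ = ℤ ⊕ U³ ⊕ ℤ` (coordinates
`(r, e₁, f₁, e₂, f₂, e₃, f₃, s)`) acting as `h` on `U³` and as the identity on the `H⁰`
and `H⁴` summands `ℤ ⊕ ℤ`. -/
def emb8 (h : Matrix (Fin 6) (Fin 6) ℤ) : Matrix (Fin 8) (Fin 8) ℤ :=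
  !![1, 0,     0,     0,     0,     0,     0,     0;
     0, h 0 0, h 0 1, h 0 2, h 0 3, h 0 4, h 0 5, 0;
     0, h 1 0, h 1 1, h 1 2, h 1 3, h 1 4, h 1 5, 0;
     0, h 2 0, h 2 1, h 2 2, h 2 3, h 2 4, h 2 5, 0;
     0, h 3 0, h 3 1, h 3 2, h 3 3, h 3 4, h 3 5, 0;
     0, h 4 0, h 4 1, h 4 2, h 4 3, h 4 4, h 4 5, 0;
     0, h 5 0, h 5 1, h 5 2, h 5 3, h 5 4, h 5 5, 0;
     0, 0,     0,     0,     0,     0,     0,     1]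

/-- The restriction to `K = (1,0,-1)^⊥ = U³ ⊕ ℤ(1,0,1)` (in the basis `b₀,…,b₆`) of the
isometry `emb8 h` of the Mukai lattice: it acts as `h` on `U³` and fixes `b₆ = (1,0,1)`. -/
def emb7 (h : Matrix (Fin 6) (Fin 6) ℤ) : Matrix (Fin 7) (Fin 7) ℤ :=
  !![h 0 0, h 0 1, h 0 2, h 0 3, h 0 4, h 0 5, 0;
     h 1 0, h 1 1, h 1 2, h 1 3, h 1 4, h 1 5, 0;
     h 2 0, h 2 1, h 2 2, h 2 3, h 2 4, h 2 5, 0;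
     h 3 0, h 3 1, h 3 2, h 3 3, h 3 4, h 3 5, 0;
     h 4 0, h 4 1, h 4 2, h 4 3, h 4 4, h 4 5, 0;
     h 5 0, h 5 1, h 5 2, h 5 3, h 5 4, h 5 5, 0;
     0,     0,     0,     0,     0,     0,     1]

/-- The matrix (with columns in Mukai-lattice coordinates `(r, e₁, f₁, e₂, f₂, e₃, f₃, s)`,
rows indexed by the basis `b₀,…,b₆` of `K`) of the isometry
`φ : K = (1,0,-1)^⊥ → K' = (0,e+f,1)^⊥`, `φ((r, ae+bf+α, r)) = (-a, re-(r+a)f+α, r+b)`: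
its columns are `φ(b₀) = (-1,-f,0)`, `φ(b₁) = (0,0,1)`, `φ(b₂) = (0,e₂,0)`, …,
`φ(b₅) = (0,f₃,0)`, `φ(b₆) = (0,e-f,1)`. -/
def PhiM : Matrix (Fin 8) (Fin 7) ℤ :=
  !![-1, 0, 0, 0, 0, 0, 0;
      0, 0, 0, 0, 0, 0, 1;
     -1, 0, 0, 0, 0, 0, -1;
      0, 0, 1, 0, 0, 0, 0;
      0, 0, 0, 1, 0, 0, 0;
      0, 0, 0, 0, 1, 0, 0;
      0, 0, 0, 0, 0, 1, 0;
      0, 1, 0, 0, 0, 0, 1]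

/-!
The group `G` contains the Eichler transvections `E(e, a)` of `K = U³ ⊕ ℤ(1, 0, 1)` with `e` in the
last two hyperbolic planes: for `a ∈ U³` they come from `SO⁺(U³)`, and `φ` turns the transvection
`E(e, n(e₁ - f₁))` of `U³`, which fixes `e₁ + f₁`, into `E(e, n(1, 0, 1) - n f₁)`; the
transvections with the same `e` multiply by adding their `a`. They all lie in `SO⁺(K)`.

For `g ∈ SO⁺(K)` the vector `g(1, 0, 1)` has square `-2` and pairs evenly with `K`, so it has the
form `2u + c(1, 0, 1)`. Transvections along `e₂` and `f₂` act on such vectors like the Euclidean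
algorithm, and a descent on the `f₂`-coordinate carries every one of them to `(1, 0, 1)`. Hence some
`γ ∈ G` makes `γ g` fix `(1, 0, 1)`, and then `γ g` is the extension of an element of `SO⁺(U³)`.

That transvections preserve orientation, and that orientation preservation is multiplicative,
follows by connectedness: the pairing matrix of two maximal positive tuples is never singular.
-/

section PositiveTuples

variable {ι : Type*} [Fintype ι]

/-- The real version of `IsMaxPosTuple`: the rows of `w` span a maximal positive definite subspace
for the form with Gram matrix `B`. A tuple is a matrix whose rows are its members, so that the
matrix of pairings of two tuples `v`, `w` is `v * B * wᵀ`, and applying `g` to the members of `w`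
gives `w * gᵀ`. -/
def IsMaxPosRows (B : Matrix ι ι ℝ) {k : ℕ} (w : Matrix (Fin k) ι ℝ) : Prop :=
  (w * B * wᵀ).PosDef ∧ ∀ w' : Matrix (Fin (k + 1)) ι ℝ, ¬ (w' * B * w'ᵀ).PosDef

theorem pos_of_continuous_of_ne_zero {f : ℝ → ℝ} (hf : Continuous f) (h0 : 0 < f 0)
    (hne : ∀ s ∈ Set.Icc (0 : ℝ) 1, f s ≠ 0) : 0 < f 1 := by
  by_contra! h1
  obtain ⟨s, hs, hfs⟩ := intermediate_value_Icc' zero_le_one hf.continuousOn ⟨h1, h0.le⟩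
  exact hne s hs hfs

theorem dotProduct_mul_mul_transpose_mulVec {m : Type*} [Fintype m] (B : Matrix ι ι ℝ)
    (w : Matrix m ι ℝ) (y : m → ℝ) :
    y ⬝ᵥ (w * B * wᵀ) *ᵥ y = (y ᵥ* w) ⬝ᵥ B *ᵥ (y ᵥ* w) := by
  rw [← mulVec_mulVec, ← mulVec_mulVec, mulVec_transpose, dotProduct_mulVec]

theorem isHermitian_mul_mul_transpose {m : Type*} {B : Matrix ι ι ℝ} (hB : B.IsSymm)
    (w : Matrix m ι ℝ) : (w * B * wᵀ).IsHermitian := by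
  simp only [IsHermitian, conjTranspose_eq_transpose_of_trivial, transpose_mul,
    transpose_transpose, hB.eq, Matrix.mul_assoc]

variable {B : Matrix ι ι ℝ} {k : ℕ} {u v w : Matrix (Fin k) ι ℝ}

theorem posDef_vecCons (hB : B.IsSymm) (hw : (w * B * wᵀ).PosDef) {x : ι → ℝ}
    (hwx : (w * B) *ᵥ x = 0) (hx : 0 < x ⬝ᵥ B *ᵥ x) :
    (of (vecCons x (of.symm w)) * B * (of (vecCons x (of.symm w)))ᵀ).PosDef := by
  refine .of_dotProduct_mulVec_pos (isHermitian_mul_mul_transpose hB _) fun y hy => ?_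
  have hwBx (z : Fin k → ℝ) : (z ᵥ* w) ⬝ᵥ B *ᵥ x = 0 := by
    rw [← dotProduct_mulVec, mulVec_mulVec, hwx, dotProduct_zero]
  have hxBw (z : Fin k → ℝ) : x ⬝ᵥ B *ᵥ (z ᵥ* w) = 0 := by
    rw [dotProduct_mulVec, ← mulVec_transpose, hB.eq, dotProduct_comm, hwBx]
  have hquad : y ⬝ᵥ (of (vecCons x (of.symm w)) * B * (of (vecCons x (of.symm w)))ᵀ) *ᵥ y =
      vecHead y ^ 2 * (x ⬝ᵥ B *ᵥ x) + vecTail y ⬝ᵥ (w * B * wᵀ) *ᵥ vecTail y := by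
    simp only [dotProduct_mul_mul_transpose_mulVec, vecMul_cons, Equiv.apply_symm_apply,
      mulVec_add, mulVec_smul, add_dotProduct, dotProduct_add, smul_dotProduct, dotProduct_smul,
      smul_eq_mul, hwBx, hxBw]
    ring
  rw [star_trivial, hquad]
  by_cases htail : vecTail y = 0
  · have hhead : vecHead y ≠ 0 := fun hhead =>
      hy (funext (Fin.cases hhead fun i => congrFun htail i))
    rw [htail, zero_dotProduct, add_zero]
    positivity
  · have := hw.dotProduct_mulVec_pos htail
    rw [star_trivial] at this
    positivity

theorem IsMaxPosRows.dotProduct_mulVec_nonpos (hB : B.IsSymm) (hw : IsMaxPosRows B w) {x : ι → ℝ}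
    (hwx : (w * B) *ᵥ x = 0) : x ⬝ᵥ B *ᵥ x ≤ 0 := by
  by_contra! hx
  exact hw.2 _ (posDef_vecCons hB hw.1 hwx hx)

theorem IsMaxPosRows.det_ne_zero (hB : B.IsSymm) (hw : IsMaxPosRows B w)
    (hv : (v * B * vᵀ).PosDef) : (w * B * vᵀ).det ≠ 0 := by
  intro hdet
  obtain ⟨y, hy, hwy⟩ := exists_mulVec_eq_zero_iff.2 hdet
  have hnonpos := hw.dotProduct_mulVec_nonpos hB (x := y ᵥ* v) (by
    rw [← mulVec_transpose, mulVec_mulVec, hwy])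
  have hpos := hv.dotProduct_mulVec_pos hy
  rw [star_trivial, dotProduct_mul_mul_transpose_mulVec] at hpos
  exact hpos.not_ge hnonpos

theorem IsMaxPosRows.of_posDef (hw : IsMaxPosRows B w) (hv : (v * B * vᵀ).PosDef) :
    IsMaxPosRows B v :=
  ⟨hv, hw.2⟩

theorem IsMaxPosRows.posSemidef_neg (hB : B.IsSymm) (hw : IsMaxPosRows B w)
    {m : Matrix (Fin k) ι ℝ} (hwm : w * B * mᵀ = 0) : (-(m * B * mᵀ)).PosSemidef := by
  refine .of_dotProduct_mulVec_nonneg (isHermitian_mul_mul_transpose hB m).neg fun y => ?_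
  rw [star_trivial, neg_mulVec, dotProduct_neg, dotProduct_mul_mul_transpose_mulVec, neg_nonneg]
  exact hw.dotProduct_mulVec_nonpos hB (by
    rw [← mulVec_transpose, mulVec_mulVec, hwm, zero_mulVec])

/-- The orthogonal projection of the members of `v` to the span of the members of `w`. -/
noncomputable def projRows (B : Matrix ι ι ℝ) (w v : Matrix (Fin k) ι ℝ) : Matrix (Fin k) ι ℝ :=
  v * B * wᵀ * (w * B * wᵀ)⁻¹ * w

theorem projRows_mul_mul_transpose (hw : (w * B * wᵀ).PosDef) :
    projRows B w v * B * wᵀ = v * B * wᵀ := by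
  have : projRows B w v * B * wᵀ = v * B * wᵀ * (w * B * wᵀ)⁻¹ * (w * B * wᵀ) := by
    simp only [projRows, Matrix.mul_assoc]
  rw [this, nonsing_inv_mul_cancel_right _ _ hw.det_pos.ne'.isUnit]

/-- Moving `v` towards its projection to the span of `w` only increases its Gram matrix, because
the form is negative semidefinite on the orthogonal complement of a maximal positive subspace. -/
theorem IsMaxPosRows.posDef_segment_projRows (hB : B.IsSymm) (hw : IsMaxPosRows B w)
    (hv : (v * B * vᵀ).PosDef) {s : ℝ} (hs : s ∈ Set.Icc (0 : ℝ) 1) :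
    ((projRows B w v + s • (v - projRows B w v)) * B *
      (projRows B w v + s • (v - projRows B w v))ᵀ).PosDef := by
  have hpw := projRows_mul_mul_transpose (v := v) hw.1
  set p := projRows B w v with hp
  set m := v - p with hm
  have hmw : m * B * wᵀ = 0 := by
    rw [hm, Matrix.sub_mul, Matrix.sub_mul, hpw, sub_self]
  have hmp : m * B * pᵀ = 0 := by
    rw [hp, projRows, transpose_mul, ← Matrix.mul_assoc, hmw, Matrix.zero_mul]
  have hwm : w * B * mᵀ = 0 := by
    simpa only [transpose_mul, transpose_transpose, hB.eq, Matrix.mul_assoc, transpose_zero]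
      using congrArg transpose hmw
  have hpm : p * B * mᵀ = 0 := by
    simpa only [transpose_mul, transpose_transpose, hB.eq, Matrix.mul_assoc, transpose_zero]
      using congrArg transpose hmp
  have hgram (r : ℝ) : (p + r • m) * B * (p + r • m)ᵀ = p * B * pᵀ + r ^ 2 • (m * B * mᵀ) := by
    simp only [transpose_add, transpose_smul, Matrix.add_mul, Matrix.mul_add, Matrix.smul_mul,
      Matrix.mul_smul, hmp, hpm, smul_zero, add_zero, zero_add, smul_smul, sq]
  have hv' : v = p + (1 : ℝ) • m := by rw [one_smul, hm, add_sub_cancel]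
  have hsplit : (p + s • m) * B * (p + s • m)ᵀ = v * B * vᵀ + (1 - s ^ 2) • -(m * B * mᵀ) := by
    conv_rhs => rw [hv', hgram]
    rw [hgram]
    module
  rw [hsplit]
  exact hv.add_posSemidef ((hw.posSemidef_neg hB hwm).smul (by nlinarith [hs.1, hs.2]))

/-- Being equally oriented is transitive: project `v` to the span of `w`, where the claim is
multiplicativity of the determinant, and follow the segment back to `v`, along which the pairing
with `u` stays nondegenerate. -/
theorem IsMaxPosRows.det_pos_trans (hB : B.IsSymm) (hw : IsMaxPosRows B w)
    (hu : (u * B * uᵀ).PosDef) (hv : (v * B * vᵀ).PosDef) (huw : 0 < (u * B * wᵀ).det)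
    (hwv : 0 < (w * B * vᵀ).det) : 0 < (u * B * vᵀ).det := by
  set p := projRows B w v with hp
  let f : ℝ → ℝ := fun s => (u * B * (p + s • (v - p))ᵀ).det
  have hf : Continuous f := by fun_prop
  have hf0 : f 0 = (u * B * wᵀ).det * (w * B * wᵀ)⁻¹.det * (w * B * vᵀ).det := by
    have hup : u * B * pᵀ = u * B * wᵀ * (w * B * wᵀ)⁻¹ * (w * B * vᵀ) := by
      simp only [hp, projRows, transpose_mul, transpose_nonsing_inv, transpose_transpose, hB.eq,
        Matrix.mul_assoc]
    simp only [f, zero_smul, add_zero, hup, det_mul]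
  have hf1 : f 1 = (u * B * vᵀ).det := by simp only [f, one_smul, add_sub_cancel]
  rw [← hf1]
  refine pos_of_continuous_of_ne_zero hf ?_ fun s hs =>
    (hw.of_posDef hu).det_ne_zero hB (hw.posDef_segment_projRows hB hv hs)
  rw [hf0]
  have := hw.1.inv.det_pos
  positivity

theorem IsMaxPosRows.mul_transpose {g : Matrix ι ι ℝ} (hg : gᵀ * B * g = B)
    (hw : IsMaxPosRows B w) : IsMaxPosRows B (w * gᵀ) := by
  refine hw.of_posDef ?_
  have : w * gᵀ * B * (w * gᵀ)ᵀ = w * (gᵀ * B * g) * wᵀ := by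
    simp only [transpose_mul, transpose_transpose, Matrix.mul_assoc]
  rw [this, hg]
  exact hw.1

end PositiveTuples

local notation:max M "ᴿ" => Matrix.map M (Int.cast : ℤ → ℝ)

section OrientationCharacter

variable {ι κ : Type*} [Fintype ι] [Fintype κ] {M : Matrix ι ι ℤ}

theorem of_bilinR {m n : Type*} (M : Matrix ι ι ℤ) (v : m → ι → ℝ) (w : n → ι → ℝ) :
    (of fun i j => bilinR M (v i) (w j)) = of v * Mᴿ * (of w)ᵀ := by
  rw [Matrix.mul_assoc]
  rfl

theorem isMaxPosTuple_iff {k : ℕ} {w : Fin k → ι → ℝ} :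
    IsMaxPosTuple M w ↔ IsMaxPosRows Mᴿ (of w) := by
  simp only [IsMaxPosTuple, IsMaxPosRows, of_bilinR]
  exact and_congr_right' (of.forall_congr fun _ => Iff.rfl)

theorem orientPres_iff {g : Matrix ι ι ℤ} :
    OrientPres M g ↔ ∀ (k : ℕ) (w : Matrix (Fin k) ι ℝ), IsMaxPosRows Mᴿ w →
      0 < (w * Mᴿ * (w * gᴿᵀ)ᵀ).det := by
  have hrows {k : ℕ} (w : Fin k → ι → ℝ) : of (fun j => gᴿ *ᵥ w j) = of w * gᴿᵀ := by
    simp only [← vecMul_transpose]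
    rfl
  simp only [OrientPres, isMaxPosTuple_iff, of_bilinR, hrows]
  exact forall_congr' fun k => of.forall_congr fun _ => Iff.rfl

theorem map_intCast_mul {l m n : Type*} [Fintype m] (A : Matrix l m ℤ) (B : Matrix m n ℤ) :
    (A * B)ᴿ = Aᴿ * Bᴿ :=
  Matrix.map_mul (f := Int.castRingHom ℝ)

theorem IsIsometry.map_intCast {g : Matrix ι ι ℤ} (hg : IsIsometry M g) :
    gᴿᵀ * Mᴿ * gᴿ = Mᴿ := by
  rw [← transpose_map, ← map_intCast_mul, ← map_intCast_mul, hg]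

theorem IsIsometry.dotProduct_mulVec {g : Matrix ι ι ℤ} (hg : IsIsometry M g) (x y : ι → ℤ) :
    (g *ᵥ x) ⬝ᵥ M *ᵥ (g *ᵥ y) = x ⬝ᵥ M *ᵥ y := by
  nth_rw 2 [← hg]
  rw [← mulVec_mulVec, ← mulVec_mulVec, Matrix.dotProduct_mulVec x, vecMul_transpose]

theorem IsIsometry.one [DecidableEq ι] : IsIsometry M 1 := by
  rw [IsIsometry, transpose_one, Matrix.one_mul, Matrix.mul_one]

theorem IsIsometry.mul {g h : Matrix ι ι ℤ} (hg : IsIsometry M g) (hh : IsIsometry M h) :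
    IsIsometry M (g * h) := by
  calc (g * h)ᵀ * M * (g * h) = hᵀ * (gᵀ * M * g) * h := by
        simp only [transpose_mul, Matrix.mul_assoc]
    _ = M := by rw [hg, hh]

theorem IsIsometry.inv [DecidableEq ι] {g : (Matrix ι ι ℤ)ˣ} (hg : IsIsometry M g.val) :
    IsIsometry M g⁻¹.val := by
  calc g⁻¹.valᵀ * M * g⁻¹.val = (g.val * g⁻¹.val)ᵀ * M * (g.val * g⁻¹.val) := by
        nth_rw 1 [← hg]
        simp only [transpose_mul, Matrix.mul_assoc]
    _ = M := by rw [Units.mul_inv, transpose_one, Matrix.one_mul, Matrix.mul_one]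

theorem OrientPres.one [DecidableEq ι] : OrientPres M 1 := by
  rw [orientPres_iff]
  intro k w hw
  rw [Matrix.map_one _ Int.cast_zero Int.cast_one, transpose_one, Matrix.mul_one]
  exact hw.1.det_pos

theorem OrientPres.mul (hM : M.IsSymm) {g h : Matrix ι ι ℤ} (hgM : IsIsometry M g)
    (hhM : IsIsometry M h) (hg : OrientPres M g) (hh : OrientPres M h) :
    OrientPres M (g * h) := by
  rw [orientPres_iff] at hg hh ⊢
  intro k w hw
  have hhw := hw.mul_transpose hhM.map_intCast
  have hghw := hhw.mul_transpose hgM.map_intCast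
  rw [map_intCast_mul, transpose_mul gᴿ, ← Matrix.mul_assoc w]
  exact hhw.det_pos_trans (hM.map _) hw.1 hghw.1 (hh k w hw) (hg k _ hhw)

theorem OrientPres.inv [DecidableEq ι] (hM : M.IsSymm) {g : (Matrix ι ι ℤ)ˣ}
    (hgM : IsIsometry M g.val) (hg : OrientPres M g.val) : OrientPres M g⁻¹.val := by
  rw [orientPres_iff] at hg ⊢
  intro k w hw
  have hpos := hg k _ (hw.mul_transpose hgM.inv.map_intCast)
  have hcancel : w * g⁻¹.valᴿᵀ * g.valᴿᵀ = w := by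
    rw [Matrix.mul_assoc, ← transpose_mul, ← map_intCast_mul, Units.mul_inv,
      Matrix.map_one _ Int.cast_zero Int.cast_one, transpose_one, Matrix.mul_one]
  rw [hcancel, ← det_transpose] at hpos
  simpa only [transpose_mul, transpose_transpose, (hM.map _).eq, Matrix.mul_assoc]
    using hpos

/-- The group `SO⁺` of the lattice with symmetric Gram matrix `M`. -/
def specialOrthogonalPlus [DecidableEq ι] (M : Matrix ι ι ℤ) (hM : M.IsSymm) :
    Subgroup (Matrix ι ι ℤ)ˣ where
  carrier := {g | IsIsometry M g.val ∧ g.val.det = 1 ∧ OrientPres M g.val}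
  one_mem' := ⟨.one, det_one, .one⟩
  mul_mem' {g h} hg hh :=
    ⟨hg.1.mul hh.1, by rw [Units.val_mul, det_mul, hg.2.1, hh.2.1, one_mul],
      .mul hM hg.1 hh.1 hg.2.2 hh.2.2⟩
  inv_mem' {g} hg :=
    ⟨hg.1.inv, by
      have h : (g.val * g⁻¹.val).det = 1 := by rw [Units.mul_inv, det_one]
      rwa [det_mul, hg.2.1, one_mul] at h, .inv hM hg.1 hg.2.2⟩

section Sublattice

variable {N : Matrix κ κ ℤ} {J : Matrix κ ι ℤ} {g : Matrix ι ι ℤ} {h : Matrix κ κ ℤ}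

theorem IsIsometry.of_intertwining (hJ : Jᵀ * N * J = M) (hgh : h * J = J * g)
    (hh : IsIsometry N h) : IsIsometry M g := by
  calc gᵀ * M * g = (J * g)ᵀ * N * (J * g) := by
        simp only [← hJ, transpose_mul, Matrix.mul_assoc]
    _ = Jᵀ * (hᵀ * N * h) * J := by
        simp only [← hgh, transpose_mul, Matrix.mul_assoc]
    _ = M := by rw [hh, hJ]

/-- The hypothesis `hneg` makes `Jᵀ` send positive tuples of `N` to positive tuples of `M`, so that
maximal positive tuples of `M` stay maximal in `N`. -/
theorem OrientPres.of_intertwining (hJ : Jᵀ * N * J = M) (hneg : (J * M * Jᵀ - N)ᴿ.PosSemidef)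
    (hgh : h * J = J * g) (hh : OrientPres N h) : OrientPres M g := by
  rw [orientPres_iff] at hh ⊢
  intro k w hw
  have hJR : Jᴿᵀ * Nᴿ * Jᴿ = Mᴿ := by
    rw [← hJ, map_intCast_mul, map_intCast_mul, transpose_map]
  have hpair (u v : Matrix (Fin k) ι ℝ) :
      u * Jᴿᵀ * Nᴿ * (v * Jᴿᵀ)ᵀ = u * Mᴿ * vᵀ := by
    simp only [← hJR, transpose_mul, transpose_transpose, Matrix.mul_assoc]
  have hmax : IsMaxPosRows Nᴿ (w * Jᴿᵀ) := by
    refine ⟨by rw [hpair]; exact hw.1, fun w' hw' => hw.2 (w' * Jᴿ) ?_⟩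
    have hsplit : w' * Jᴿ * Mᴿ * (w' * Jᴿ)ᵀ =
        w' * Nᴿ * w'ᵀ + w' * (J * M * Jᵀ - N)ᴿ * w'ᵀ := by
      rw [Matrix.map_sub _ Int.cast_sub, map_intCast_mul, map_intCast_mul, transpose_map,
        Matrix.mul_sub, Matrix.sub_mul, add_sub_cancel]
      simp only [transpose_mul, Matrix.mul_assoc]
    rw [hsplit]
    exact hw'.add_posSemidef (hneg.mul_mul_conjTranspose_same w')
  have hghR : w * Jᴿᵀ * hᴿᵀ = w * gᴿᵀ * Jᴿᵀ := by
    rw [Matrix.mul_assoc, Matrix.mul_assoc, ← transpose_mul, ← transpose_mul, ← map_intCast_mul,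
      ← map_intCast_mul, hgh]
  have hpos := hh k _ hmax
  rwa [hghR, hpair] at hpos

end Sublattice

end OrientationCharacter

section EichlerTransvections

variable {ι R : Type*} [Fintype ι] [CommRing R]

/-- The conditions on `(e, a, q)` under which `eichler M e a q` is an isometry. -/
structure IsEichlerTriple (M : Matrix ι ι R) (e a : ι → R) (q : R) : Prop where
  isotropic : e ⬝ᵥ M *ᵥ e = 0
  orthogonal : e ⬝ᵥ M *ᵥ a = 0
  norm : a ⬝ᵥ M *ᵥ a = 2 * q

variable {M : Matrix ι ι R} {e a b : ι → R} {p q : R}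

theorem dotProduct_mulVec_symm (hM : M.IsSymm) (x y : ι → R) :
    x ⬝ᵥ M *ᵥ y = y ⬝ᵥ M *ᵥ x := by
  rw [dotProduct_mulVec, ← mulVec_transpose, hM.eq, dotProduct_comm]

theorem mulVec_dotProduct_symm (hM : M.IsSymm) (x y : ι → R) :
    M *ᵥ x ⬝ᵥ y = x ⬝ᵥ M *ᵥ y := by
  rw [dotProduct_comm, dotProduct_mulVec_symm hM]

theorem IsEichlerTriple.smul (h : IsEichlerTriple M e a q) (s : R) :
    IsEichlerTriple M e (s • a) (s ^ 2 * q) where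
  isotropic := h.isotropic
  orthogonal := by rw [mulVec_smul, dotProduct_smul, h.orthogonal, smul_zero]
  norm := by
    rw [mulVec_smul, dotProduct_smul, smul_dotProduct, h.norm, smul_eq_mul, smul_eq_mul]
    ring

theorem dotProduct_mulVec_intCast (M : Matrix ι ι ℤ) (x y : ι → ℤ) :
    (fun i => (x i : ℝ)) ⬝ᵥ Mᴿ *ᵥ (fun i => (y i : ℝ)) = (x ⬝ᵥ M *ᵥ y : ℤ) := by
  simp only [dotProduct, mulVec, map_apply]
  push_cast
  rfl

variable [DecidableEq ι]

/-- The Eichler transvection `x ↦ x + (e, x) a - ((a, x) + q (e, x)) e` of the lattice with Gram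
matrix `M`. The parameter `q` stands for `(a, a) / 2`, which need not make sense in `R`. -/
def eichler (M : Matrix ι ι R) (e a : ι → R) (q : R) : Matrix ι ι R :=
  1 + vecMulVec a (M *ᵥ e) - vecMulVec e (M *ᵥ a + q • M *ᵥ e)

theorem eichler_mulVec (hM : M.IsSymm) (x : ι → R) :
    eichler M e a q *ᵥ x =
      x + (e ⬝ᵥ M *ᵥ x) • a - (a ⬝ᵥ M *ᵥ x + q * (e ⬝ᵥ M *ᵥ x)) • e := by
  simp only [eichler, sub_mulVec, add_mulVec, one_mulVec, vecMulVec_mulVec, op_smul_eq_smul,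
    add_dotProduct, smul_dotProduct, mulVec_dotProduct_symm hM, smul_eq_mul]

theorem IsEichlerTriple.transpose_mul_mul (hM : M.IsSymm) (h : IsEichlerTriple M e a q) :
    (eichler M e a q)ᵀ * M * eichler M e a q = M := by
  refine ext_iff_mulVec.2 fun x => dotProduct_eq _ _ fun y => ?_
  rw [← mulVec_mulVec, ← mulVec_mulVec, dotProduct_comm, dotProduct_mulVec, vecMul_transpose,
    dotProduct_comm _ y, eichler_mulVec hM, eichler_mulVec hM]
  simp only [mulVec_add, mulVec_sub, mulVec_smul, add_dotProduct, sub_dotProduct, smul_dotProduct,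
    dotProduct_add, dotProduct_sub, dotProduct_smul, smul_eq_mul, h.isotropic, h.orthogonal,
    h.norm, dotProduct_mulVec_symm hM a e, dotProduct_mulVec_symm hM y]
  ring

theorem IsEichlerTriple.det_eq_one (hM : M.IsSymm) (h : IsEichlerTriple M e a q) :
    (eichler M e a q).det = 1 := by
  have hfactor : eichler M e a q =
      1 + (of ![a, e])ᵀ * of ![M *ᵥ e, -(M *ᵥ a + q • M *ᵥ e)] := by
    ext i j
    simp only [eichler, Matrix.sub_apply, Matrix.add_apply, vecMulVec_apply, mul_apply,
      Fin.sum_univ_two, transpose_apply, of_apply, cons_val_zero, cons_val_one, Pi.neg_apply]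
    ring
  have hpairings (x y z t : ι → R) :
      of ![x, y] * (of ![z, t])ᵀ = !![x ⬝ᵥ z, x ⬝ᵥ t; y ⬝ᵥ z, y ⬝ᵥ t] := by
    ext i j
    fin_cases i <;> fin_cases j <;> rfl
  rw [hfactor, det_one_add_mul_comm, hpairings, det_fin_two]
  simp [mulVec_dotProduct_symm hM, h.isotropic, h.orthogonal, h.norm,
    dotProduct_mulVec_symm hM a e]

theorem eichler_mul_eichler (hM : M.IsSymm) (he : e ⬝ᵥ M *ᵥ e = 0) (ha : e ⬝ᵥ M *ᵥ a = 0)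
    (hb : e ⬝ᵥ M *ᵥ b = 0) :
    eichler M e a p * eichler M e b q = eichler M e (a + b) (p + q + a ⬝ᵥ M *ᵥ b) := by
  refine ext_iff_mulVec.2 fun x => ?_
  rw [← mulVec_mulVec]
  simp only [eichler_mulVec hM, mulVec_add, mulVec_sub, mulVec_smul, dotProduct_add,
    dotProduct_sub, dotProduct_smul, add_dotProduct, smul_eq_mul, he, ha, hb,
    dotProduct_mulVec_symm hM a e]
  module

/-- The transvections `eichler B e (s • a) (s ^ 2 * q)`, `0 ≤ s ≤ 1`, join `eichler B e a q` to the
identity. -/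
theorem IsMaxPosRows.det_mul_eichler_pos {B : Matrix ι ι ℝ} {e a : ι → ℝ} {q : ℝ} (hB : B.IsSymm)
    (h : IsEichlerTriple B e a q) {k : ℕ} {w : Matrix (Fin k) ι ℝ} (hw : IsMaxPosRows B w) :
    0 < (w * B * (w * (eichler B e a q)ᵀ)ᵀ).det := by
  let f : ℝ → ℝ := fun s => (w * B * (w * (eichler B e (s • a) (s ^ 2 * q))ᵀ)ᵀ).det
  have hf : Continuous f := by
    unfold f eichler
    fun_prop
  have hf0 : f 0 = (w * B * wᵀ).det := by
    simp [f, eichler]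
  have hf1 : f 1 = (w * B * (w * (eichler B e a q)ᵀ)ᵀ).det := by
    simp only [f, one_smul, one_pow, one_mul]
  rw [← hf1]
  exact pos_of_continuous_of_ne_zero hf (hf0 ▸ hw.1.det_pos) fun s _ =>
    hw.det_ne_zero hB (hw.mul_transpose ((h.smul s).transpose_mul_mul hB)).1

theorem eichler_map_intCast (M : Matrix ι ι ℤ) (e a : ι → ℤ) (q : ℤ) :
    (eichler M e a q)ᴿ = eichler Mᴿ (fun i => (e i : ℝ)) (fun i => (a i : ℝ)) q := by
  ext i j
  simp [eichler, vecMulVec_apply, one_apply, mulVec, dotProduct, apply_ite]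

theorem IsEichlerTriple.orientPres {M : Matrix ι ι ℤ} {e a : ι → ℤ} {q : ℤ} (hM : M.IsSymm)
    (h : IsEichlerTriple M e a q) : OrientPres M (eichler M e a q) := by
  have hR : IsEichlerTriple Mᴿ (fun i => (e i : ℝ)) (fun i => (a i : ℝ)) q :=
    ⟨by rw [dotProduct_mulVec_intCast, h.isotropic, Int.cast_zero],
      by rw [dotProduct_mulVec_intCast, h.orthogonal, Int.cast_zero],
      by rw [dotProduct_mulVec_intCast, h.norm, Int.cast_mul, Int.cast_ofNat]⟩
  rw [orientPres_iff, eichler_map_intCast]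
  exact fun k w hw => hw.det_mul_eichler_pos (hM.map _) hR

theorem IsEichlerTriple.exists_mem_specialOrthogonalPlus {M : Matrix ι ι ℤ} {e a : ι → ℤ} {q : ℤ}
    (hM : M.IsSymm) (h : IsEichlerTriple M e a q) :
    ∃ γ ∈ specialOrthogonalPlus M hM, γ.val = eichler M e a q := by
  have hdet := h.det_eq_one hM
  obtain ⟨γ, hγ⟩ := (isUnit_iff_isUnit_det _).2 (hdet ▸ isUnit_one)
  refine ⟨γ, ?_, hγ⟩
  change IsIsometry M γ.val ∧ γ.val.det = 1 ∧ OrientPres M γ.val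
  rw [hγ]
  exact ⟨h.transpose_mul_mul hM, hdet, h.orientPres hM⟩

end EichlerTransvections

section MukaiGenerators

/-- The vector `u + n (1, 0, 1)` of `K = U³ ⊕ ℤ(1, 0, 1)`. -/
def toK (u : Fin 6 → ℤ) (n : ℤ) : Fin 7 → ℤ :=
  ![u 0, u 1, u 2, u 3, u 4, u 5, n]

/-- The vector `(r, u, s)` of the Mukai lattice. -/
def mukaiVec (r : ℤ) (u : Fin 6 → ℤ) (s : ℤ) : Fin 8 → ℤ :=
  ![r, u 0, u 1, u 2, u 3, u 4, u 5, s]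

theorem toK_castSucc_last (v : Fin 7 → ℤ) : toK (fun i => v i.castSucc) (v 6) = v := by
  ext i
  fin_cases i <;> rfl

theorem toK_add (u v : Fin 6 → ℤ) (m n : ℤ) : toK (u + v) (m + n) = toK u m + toK v n := by
  ext i
  fin_cases i <;> rfl

theorem ext_mulVec_toK {m : Type*} {A B : Matrix m (Fin 7) ℤ}
    (h : ∀ u n, A *ᵥ toK u n = B *ᵥ toK u n) : A = B :=
  ext_iff_mulVec.2 fun v => toK_castSucc_last v ▸ h _ _

theorem U3G_isSymm : U3G.IsSymm := by decide

theorem G7_isSymm : G7.IsSymm := by decide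

theorem dotProduct_U3G_mulVec (u v : Fin 6 → ℤ) :
    u ⬝ᵥ U3G *ᵥ v =
      u 0 * v 1 + u 1 * v 0 + u 2 * v 3 + u 3 * v 2 + u 4 * v 5 + u 5 * v 4 := by
  simp only [U3G, mulVec, dotProduct, Fin.sum_univ_six, of_apply, cons_val', cons_val]
  ring

theorem toK_dotProduct_G7_mulVec_toK (u v : Fin 6 → ℤ) (m n : ℤ) :
    toK u m ⬝ᵥ G7 *ᵥ toK v n = u ⬝ᵥ U3G *ᵥ v - 2 * m * n := by
  rw [dotProduct_U3G_mulVec]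
  simp only [toK, G7, mulVec, dotProduct, Fin.sum_univ_seven, of_apply, cons_val', cons_val]
  ring

theorem emb7_mulVec_toK (h : Matrix (Fin 6) (Fin 6) ℤ) (u : Fin 6 → ℤ) (n : ℤ) :
    emb7 h *ᵥ toK u n = toK (h *ᵥ u) n := by
  ext i
  fin_cases i <;> simp [emb7, toK, mulVec, dotProduct, Fin.sum_univ_succ]

theorem emb8_mulVec_mukaiVec (h : Matrix (Fin 6) (Fin 6) ℤ) (r : ℤ) (u : Fin 6 → ℤ) (s : ℤ) :
    emb8 h *ᵥ mukaiVec r u s = mukaiVec r (h *ᵥ u) s := by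
  ext i
  fin_cases i <;> simp [emb8, mukaiVec, mulVec, dotProduct, Fin.sum_univ_succ]

theorem PhiM_mulVec_toK (u : Fin 6 → ℤ) (n : ℤ) :
    PhiM *ᵥ toK u n =
      mukaiVec (-u 0) ![n, -u 0 - n, u 2, u 3, u 4, u 5] (u 1 + n) := by
  ext i
  fin_cases i <;>
    simp [PhiM, toK, mukaiVec, mulVec, dotProduct, Fin.sum_univ_succ, sub_eq_add_neg]

theorem eichler_G7_mulVec_toK (e a u : Fin 6 → ℤ) (q m n : ℤ) :
    eichler G7 (toK e 0) (toK a m) q *ᵥ toK u n =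
      toK (u + (e ⬝ᵥ U3G *ᵥ u) • a - (a ⬝ᵥ U3G *ᵥ u - 2 * m * n + q * (e ⬝ᵥ U3G *ᵥ u)) • e)
        (n + (e ⬝ᵥ U3G *ᵥ u) * m) := by
  rw [eichler_mulVec G7_isSymm]
  simp only [toK_dotProduct_G7_mulVec_toK]
  ext i
  fin_cases i <;> simp [toK]

theorem emb7_eichler (e u : Fin 6 → ℤ) (q : ℤ) :
    emb7 (eichler U3G e u q) = eichler G7 (toK e 0) (toK u 0) q := by
  refine ext_mulVec_toK fun x n => ?_
  rw [emb7_mulVec_toK, eichler_mulVec U3G_isSymm, eichler_G7_mulVec_toK]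
  simp only [mul_zero, zero_mul, sub_zero, add_zero]

theorem PhiM_mul_eichler {e : Fin 6 → ℤ} (he₀ : e 0 = 0) (he₁ : e 1 = 0) (n : ℤ) :
    PhiM * eichler G7 (toK e 0) (toK ![0, -n, 0, 0, 0, 0] n) (-n ^ 2) =
      emb8 (eichler U3G e ![n, -n, 0, 0, 0, 0] (-n ^ 2)) * PhiM := by
  refine ext_mulVec_toK fun x m => ?_
  rw [← mulVec_mulVec, ← mulVec_mulVec, eichler_G7_mulVec_toK, PhiM_mulVec_toK, PhiM_mulVec_toK,
    emb8_mulVec_mukaiVec, eichler_mulVec U3G_isSymm]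
  simp only [dotProduct_U3G_mulVec]
  ext i
  fin_cases i <;>
    simp only [mukaiVec, Pi.add_apply, Pi.sub_apply, Pi.smul_apply, smul_eq_mul, cons_val, he₀,
      he₁, Fin.zero_eta, Fin.mk_one, Fin.reduceFinMk] <;>
    ring

/-- The generators of the group `G` of the theorem. -/
def mukaiGenerators : Set (Matrix (Fin 7) (Fin 7) ℤ)ˣ :=
  {g | ∃ h : Matrix (Fin 6) (Fin 6) ℤ,
      IsIsometry U3G h ∧ h.det = 1 ∧ OrientPres U3G h ∧ g.val = emb7 h} ∪
    {g | ∃ h : Matrix (Fin 6) (Fin 6) ℤ,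
      IsIsometry U3G h ∧ h.det = 1 ∧ OrientPres U3G h ∧
      h *ᵥ ![1, 1, 0, 0, 0, 0] = ![1, 1, 0, 0, 0, 0] ∧ PhiM * g.val = emb8 h * PhiM}

/-- The intersection of the group `G` of the theorem with `SO⁺(K)`. -/
def mukaiSubgroup : Subgroup (Matrix (Fin 7) (Fin 7) ℤ)ˣ :=
  Subgroup.closure mukaiGenerators ⊓ specialOrthogonalPlus G7 G7_isSymm

theorem exists_mem_mukaiSubgroup_eq_eichler_of_emb7 {e u : Fin 6 → ℤ} {q : ℤ}
    (h : IsEichlerTriple U3G e u q) :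
    ∃ γ ∈ mukaiSubgroup, γ.val = eichler G7 (toK e 0) (toK u 0) q := by
  have hK : IsEichlerTriple G7 (toK e 0) (toK u 0) q := by
    constructor <;> simp [toK_dotProduct_G7_mulVec_toK, h.isotropic, h.orthogonal, h.norm]
  obtain ⟨γ, hγ, hγe⟩ := hK.exists_mem_specialOrthogonalPlus G7_isSymm
  refine ⟨γ, ⟨Subgroup.subset_closure (Or.inl ⟨eichler U3G e u q, ?_⟩), hγ⟩, hγe⟩
  exact ⟨h.transpose_mul_mul U3G_isSymm, h.det_eq_one U3G_isSymm, h.orientPres U3G_isSymm,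
    hγe.trans (emb7_eichler e u q).symm⟩

theorem exists_mem_mukaiSubgroup_eq_eichler_of_PhiM {e : Fin 6 → ℤ}
    (he : e ⬝ᵥ U3G *ᵥ e = 0) (he₀ : e 0 = 0) (he₁ : e 1 = 0) (n : ℤ) :
    ∃ γ ∈ mukaiSubgroup,
      γ.val = eichler G7 (toK e 0) (toK ![0, -n, 0, 0, 0, 0] n) (-n ^ 2) := by
  have hU : IsEichlerTriple U3G e ![n, -n, 0, 0, 0, 0] (-n ^ 2) := by
    refine ⟨he, ?_, ?_⟩ <;> simp only [dotProduct_U3G_mulVec, cons_val, he₀, he₁] <;> ring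
  have hK : IsEichlerTriple G7 (toK e 0) (toK ![0, -n, 0, 0, 0, 0] n) (-n ^ 2) := by
    refine ⟨?_, ?_, ?_⟩ <;> rw [toK_dotProduct_G7_mulVec_toK]
    · rw [he]; ring
    · simp only [dotProduct_U3G_mulVec, cons_val, he₀]; ring
    · simp only [dotProduct_U3G_mulVec, cons_val]; ring
  have hfix : eichler U3G e ![n, -n, 0, 0, 0, 0] (-n ^ 2) *ᵥ ![1, 1, 0, 0, 0, 0] =
      ![1, 1, 0, 0, 0, 0] := by
    have heef : e ⬝ᵥ U3G *ᵥ ![1, 1, 0, 0, 0, 0] = 0 := by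
      simp only [dotProduct_U3G_mulVec, cons_val, he₀, he₁]; ring
    have haef : ![n, -n, 0, 0, 0, 0] ⬝ᵥ U3G *ᵥ ![1, 1, 0, 0, 0, 0] = 0 := by
      simp only [dotProduct_U3G_mulVec, cons_val]; ring
    rw [eichler_mulVec U3G_isSymm, heef, haef]
    module
  obtain ⟨γ, hγ, hγe⟩ := hK.exists_mem_specialOrthogonalPlus G7_isSymm
  refine ⟨γ, ⟨Subgroup.subset_closure (Or.inr ⟨eichler U3G e ![n, -n, 0, 0, 0, 0] (-n ^ 2), ?_⟩),
    hγ⟩, hγe⟩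
  exact ⟨hU.transpose_mul_mul U3G_isSymm, hU.det_eq_one U3G_isSymm, hU.orientPres U3G_isSymm,
    hfix, by rw [hγe, PhiM_mul_eichler he₀ he₁]⟩

theorem exists_mem_mukaiSubgroup_eq_eichler {e u : Fin 6 → ℤ} {n q : ℤ}
    (h : IsEichlerTriple G7 (toK e 0) (toK u n) q) (he₀ : e 0 = 0) (he₁ : e 1 = 0) :
    ∃ γ ∈ mukaiSubgroup, γ.val = eichler G7 (toK e 0) (toK u n) q := by
  obtain ⟨he, heu, hu⟩ := h
  rw [toK_dotProduct_G7_mulVec_toK] at he heu hu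
  have heU : e ⬝ᵥ U3G *ᵥ e = 0 := by linarith
  have hU : IsEichlerTriple U3G e (u + ![0, n, 0, 0, 0, 0]) (q + n ^ 2 + n * u 0) := by
    refine ⟨heU, ?_, ?_⟩ <;>
      simp only [dotProduct_U3G_mulVec, Pi.add_apply, cons_val, he₀, he₁] at heu hu ⊢ <;>
      linarith
  have hsum : ![0, -n, 0, 0, 0, 0] + (u + ![0, n, 0, 0, 0, 0]) = u := by
    ext i
    simp only [Pi.add_apply]
    fin_cases i <;> simp
  have hpair : ![0, -n, 0, 0, 0, 0] ⬝ᵥ U3G *ᵥ (u + ![0, n, 0, 0, 0, 0]) = -(n * u 0) := by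
    simp only [dotProduct_U3G_mulVec, Pi.add_apply, cons_val]
    ring
  obtain ⟨γ, hγ, hγe⟩ := exists_mem_mukaiSubgroup_eq_eichler_of_PhiM heU he₀ he₁ n
  obtain ⟨δ, hδ, hδe⟩ := exists_mem_mukaiSubgroup_eq_eichler_of_emb7 hU
  refine ⟨γ * δ, mul_mem hγ hδ, ?_⟩
  rw [Units.val_mul, hγe, hδe, eichler_mul_eichler G7_isSymm, ← toK_add, hsum, add_zero,
    toK_dotProduct_G7_mulVec_toK, hpair]
  · congr 1
    ring
  · rw [toK_dotProduct_G7_mulVec_toK, heU, mul_zero, sub_zero]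
  · rw [toK_dotProduct_G7_mulVec_toK, dotProduct_U3G_mulVec]
    simp only [cons_val, he₀]
    ring
  · rw [toK_dotProduct_G7_mulVec_toK, hU.orthogonal, mul_zero, sub_zero]

end MukaiGenerators

section Orbits

/-- The relation of lying in the same orbit of `mukaiSubgroup`. -/
def MukaiEquiv (v w : Fin 7 → ℤ) : Prop :=
  ∃ γ ∈ mukaiSubgroup, γ.val *ᵥ v = w

/-- The vector `2 u + c (1, 0, 1)` of `K`. These are the vectors whose pairings with
`K` are all even. -/
def evenVec (u : Fin 6 → ℤ) (c : ℤ) : Fin 7 → ℤ :=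
  toK ((2 : ℤ) • u) c

variable {u v : Fin 6 → ℤ} {c d r : ℤ}

theorem MukaiEquiv.trans {x y z : Fin 7 → ℤ} (hxy : MukaiEquiv x y) (hyz : MukaiEquiv y z) :
    MukaiEquiv x z := by
  obtain ⟨γ, hγ, rfl⟩ := hxy
  obtain ⟨δ, hδ, rfl⟩ := hyz
  exact ⟨δ * γ, mul_mem hδ hγ, by rw [Units.val_mul, mulVec_mulVec]⟩

theorem MukaiEquiv.dotProduct_G7_mulVec {x y : Fin 7 → ℤ} (h : MukaiEquiv x y) :
    y ⬝ᵥ G7 *ᵥ y = x ⬝ᵥ G7 *ᵥ x := by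
  obtain ⟨γ, hγ, rfl⟩ := h
  exact hγ.2.1.dotProduct_mulVec x x

theorem evenVec_dotProduct_G7_mulVec (u : Fin 6 → ℤ) (c : ℤ) :
    evenVec u c ⬝ᵥ G7 *ᵥ evenVec u c = 4 * (u ⬝ᵥ U3G *ᵥ u) - 2 * c ^ 2 := by
  rw [evenVec, toK_dotProduct_G7_mulVec_toK, mulVec_smul, dotProduct_smul, smul_dotProduct]
  ring

theorem MukaiEquiv.sq_sub_one_eq (h : MukaiEquiv (evenVec u c) (evenVec v d))
    (hu : c ^ 2 - 1 = 2 * (u ⬝ᵥ U3G *ᵥ u)) : d ^ 2 - 1 = 2 * (v ⬝ᵥ U3G *ᵥ v) := by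
  have hnorm := h.dotProduct_G7_mulVec
  rw [evenVec_dotProduct_G7_mulVec, evenVec_dotProduct_G7_mulVec] at hnorm
  linarith

theorem mukaiEquiv_evenVec_eichler {e a : Fin 6 → ℤ} {n q : ℤ}
    (h : IsEichlerTriple G7 (toK e 0) (toK a n) q) (he₀ : e 0 = 0) (he₁ : e 1 = 0)
    (u : Fin 6 → ℤ) (c : ℤ) :
    MukaiEquiv (evenVec u c)
      (evenVec
        (u + (e ⬝ᵥ U3G *ᵥ u) • a - (a ⬝ᵥ U3G *ᵥ u - n * c + q * (e ⬝ᵥ U3G *ᵥ u)) • e)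
        (c + 2 * n * (e ⬝ᵥ U3G *ᵥ u))) := by
  obtain ⟨γ, hγ, hγe⟩ := exists_mem_mukaiSubgroup_eq_eichler h he₀ he₁
  refine ⟨γ, hγ, ?_⟩
  rw [hγe, evenVec, eichler_G7_mulVec_toK, evenVec]
  simp only [mulVec_smul, dotProduct_smul, smul_eq_mul]
  congr 1
  · module
  · ring

theorem isEichlerTriple_e₂ (a₀ a₁ a₄ a₅ n : ℤ) :
    IsEichlerTriple G7 (toK ![0, 0, 1, 0, 0, 0] 0) (toK ![a₀, a₁, 0, 0, a₄, a₅] n)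
      (a₀ * a₁ + a₄ * a₅ - n ^ 2) := by
  refine ⟨?_, ?_, ?_⟩ <;>
    simp only [toK_dotProduct_G7_mulVec_toK, dotProduct_U3G_mulVec, cons_val] <;> ring

theorem isEichlerTriple_f₂ (a₀ a₁ a₄ a₅ n : ℤ) :
    IsEichlerTriple G7 (toK ![0, 0, 0, 1, 0, 0] 0) (toK ![a₀, a₁, 0, 0, a₄, a₅] n)
      (a₀ * a₁ + a₄ * a₅ - n ^ 2) := by
  refine ⟨?_, ?_, ?_⟩ <;>
    simp only [toK_dotProduct_G7_mulVec_toK, dotProduct_U3G_mulVec, cons_val] <;> ring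

theorem mukaiEquiv_evenVec_e₂ (u : Fin 6 → ℤ) (a₀ a₁ a₄ a₅ n c : ℤ) :
    MukaiEquiv (evenVec u c) (evenVec ![u 0 + u 3 * a₀, u 1 + u 3 * a₁,
      u 2 - (a₀ * u 1 + a₁ * u 0 + a₄ * u 5 + a₅ * u 4 - n * c
        + (a₀ * a₁ + a₄ * a₅ - n ^ 2) * u 3),
      u 3, u 4 + u 3 * a₄, u 5 + u 3 * a₅] (c + 2 * n * u 3)) := by
  convert mukaiEquiv_evenVec_eichler (isEichlerTriple_e₂ a₀ a₁ a₄ a₅ n) rfl rfl u c using 2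
  · ext i
    simp only [dotProduct_U3G_mulVec, Pi.add_apply, Pi.sub_apply, Pi.smul_apply, smul_eq_mul]
    fin_cases i <;> simp
  · rw [dotProduct_U3G_mulVec]
    simp

theorem mukaiEquiv_evenVec_f₂ (u : Fin 6 → ℤ) (a₀ a₁ a₄ a₅ n c : ℤ) :
    MukaiEquiv (evenVec u c) (evenVec ![u 0 + u 2 * a₀, u 1 + u 2 * a₁, u 2,
      u 3 - (a₀ * u 1 + a₁ * u 0 + a₄ * u 5 + a₅ * u 4 - n * c
        + (a₀ * a₁ + a₄ * a₅ - n ^ 2) * u 2),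
      u 4 + u 2 * a₄, u 5 + u 2 * a₅] (c + 2 * n * u 2)) := by
  convert mukaiEquiv_evenVec_eichler (isEichlerTriple_f₂ a₀ a₁ a₄ a₅ n) rfl rfl u c using 2
  · ext i
    simp only [dotProduct_U3G_mulVec, Pi.add_apply, Pi.sub_apply, Pi.smul_apply, smul_eq_mul]
    fin_cases i <;> simp
  · rw [dotProduct_U3G_mulVec]
    simp

theorem mukaiEquiv_evenVec_of_eq_zero (hnorm : c ^ 2 - 1 = 2 * (u ⬝ᵥ U3G *ᵥ u))
    (hu : ∀ i, i ≠ 3 → u i = 0) :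
    MukaiEquiv (evenVec u c) (evenVec 0 1) := by
  have hu_eq : u = ![0, 0, 0, u 3, 0, 0] := by
    ext i
    fin_cases i <;> simp [hu]
  have shift (y d n : ℤ) :
      MukaiEquiv (evenVec ![0, 0, 0, y, 0, 0] d) (evenVec ![0, 0, 0, y + n * d, 0, 0] d) := by
    simpa using mukaiEquiv_evenVec_f₂ ![0, 0, 0, y, 0, 0] 0 0 0 0 n d
  have flip : MukaiEquiv (evenVec ![0, 0, 0, 1, 0, 0] (-1)) (evenVec ![0, 0, 0, 1, 0, 0] 1) := by
    simpa using mukaiEquiv_evenVec_e₂ ![0, 0, 0, 1, 0, 0] 0 0 0 0 1 (-1)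
  have to_zero (y : ℤ) : MukaiEquiv (evenVec ![0, 0, 0, y, 0, 0] 1) (evenVec 0 1) := by
    rw [show (0 : Fin 6 → ℤ) = ![0, 0, 0, 0, 0, 0] by decide]
    simpa using shift y 1 (-y)
  have hc : c ^ 2 = 1 := by
    simpa [dotProduct_U3G_mulVec, hu, sub_eq_zero] using hnorm
  rw [hu_eq]
  rcases sq_eq_one_iff.1 hc with rfl | rfl
  · exact to_zero _
  · have to_one := shift (u 3) (-1) (u 3 - 1)
    rw [show u 3 + (u 3 - 1) * -1 = 1 by ring] at to_one
    exact to_one.trans (flip.trans (to_zero 1))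

theorem exists_mukaiEquiv_reduced (hu : u 3 ≠ 0) (c : ℤ) :
    ∃ v d, MukaiEquiv (evenVec u c) (evenVec v d) ∧ v 3 = u 3 ∧
      (∀ i, i ≠ 2 → i ≠ 3 → |v i| < |v 3|) ∧ |d| ≤ |v 3| := by
  refine ⟨_, _, mukaiEquiv_evenVec_e₂ u (-(u 0 / u 3)) (-(u 1 / u 3)) (-(u 4 / u 3))
    (-(u 5 / u 3)) (-((c + |u 3|) / (2 * u 3))) c, rfl, ?_, ?_⟩
  · have hmod (x : ℤ) : |x + u 3 * -(x / u 3)| < |u 3| := by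
      rw [mul_neg, ← sub_eq_add_neg, ← Int.emod_def, abs_of_nonneg (Int.emod_nonneg x hu)]
      exact Int.emod_lt_abs x hu
    intro i h2 h3
    fin_cases i <;> first | contradiction | exact hmod _
  · have hmod : c + 2 * -((c + |u 3|) / (2 * u 3)) * u 3 =
        (c + |u 3|) % (2 * u 3) - |u 3| := by
      rw [Int.emod_def]
      ring
    have hlt := Int.emod_lt_abs (c + |u 3|) (mul_ne_zero two_ne_zero hu)
    have hnonneg := Int.emod_nonneg (c + |u 3|) (mul_ne_zero two_ne_zero hu)
    rw [abs_mul, abs_two] at hlt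
    change |c + 2 * -((c + |u 3|) / (2 * u 3)) * u 3| ≤ |u 3|
    rw [hmod, abs_le]
    constructor <;> linarith

/-- `r` is a coordinate of `u` whose multiples some element of `mukaiSubgroup` subtracts from the
coordinate `u 3`, see `IsPivot.exists_mukaiEquiv`. -/
def IsPivot (u : Fin 6 → ℤ) (r : ℤ) : Prop :=
  (∃ i, i ≠ 2 ∧ i ≠ 3 ∧ u i = r) ∨ ((∀ i, i ≠ 2 → i ≠ 3 → u i = 0) ∧ u 2 = r)

theorem exists_isPivot_ne_zero (hu : ¬ ∀ i, i ≠ 3 → u i = 0) : ∃ r, r ≠ 0 ∧ IsPivot u r := by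
  by_cases h : ∀ i, i ≠ 2 → i ≠ 3 → u i = 0
  · refine ⟨u 2, fun h2 => hu fun i h3 => ?_, Or.inr ⟨h, rfl⟩⟩
    by_cases hi : i = 2
    · rw [hi, h2]
    · exact h i hi h3
  · push Not at h
    obtain ⟨i, h2, h3, hi⟩ := h
    exact ⟨u i, hi, Or.inl ⟨i, h2, h3, rfl⟩⟩

theorem IsPivot.exists_mukaiEquiv (hr : IsPivot u r) (c k : ℤ) :
    ∃ v, MukaiEquiv (evenVec u c) (evenVec v c) ∧ v 3 = u 3 - k * r := by
  have move (a₀ a₁ a₄ a₅ : ℤ) : ∃ v, MukaiEquiv (evenVec u c) (evenVec v c) ∧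
      v 3 = u 3 - (a₀ * u 1 + a₁ * u 0 + a₄ * u 5 + a₅ * u 4 + (a₀ * a₁ + a₄ * a₅) * u 2) :=
    ⟨_, by simpa using mukaiEquiv_evenVec_f₂ u a₀ a₁ a₄ a₅ 0 c, rfl⟩
  rcases hr with ⟨i, h2, h3, rfl⟩ | ⟨hzero, rfl⟩
  · fin_cases i
    · simpa using move 0 k 0 0
    · simpa using move k 0 0 0
    · contradiction
    · contradiction
    · simpa using move 0 0 0 k
    · simpa using move 0 0 k 0
  · simpa [hzero] using move 1 k 0 0

theorem IsPivot.abs_lt (hr : IsPivot u r) (hu3 : u 3 ≠ 0)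
    (hu : ∀ i, i ≠ 2 → i ≠ 3 → |u i| < |u 3|) (hc : |c| ≤ |u 3|)
    (hnorm : c ^ 2 - 1 = 2 * (u ⬝ᵥ U3G *ᵥ u)) : |r| < |u 3| := by
  rcases hr with ⟨i, h2, h3, rfl⟩ | ⟨hzero, rfl⟩
  · exact hu i h2 h3
  · have hxy : c ^ 2 - 1 = 4 * (u 2 * u 3) := by
      simp only [hnorm, dotProduct_U3G_mulVec, hzero 0 (by decide) (by decide),
        hzero 4 (by decide) (by decide)]
      ring
    have hc_sq : c ^ 2 ≤ |u 3| ^ 2 := (sq_le_sq.2 hc).trans_eq (sq_abs _).symm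
    have hbound : 4 * (|u 2| * |u 3|) ≤ |u 3| ^ 2 + 1 := by
      rw [← abs_mul]
      cases abs_cases (u 2 * u 3) <;> nlinarith
    have hpos : 0 < |u 3| := abs_pos.2 hu3
    by_contra! hle
    nlinarith

theorem exists_sub_mul_ne_zero_natAbs_lt {y r : ℤ} (hr : r ≠ 0) (hlt : |r| < |y|) :
    ∃ k, y - k * r ≠ 0 ∧ (y - k * r).natAbs < y.natAbs := by
  rw [Int.abs_eq_natAbs, Int.abs_eq_natAbs] at hlt
  by_cases hsign : 0 < y ↔ 0 < r
  · exact ⟨1, by omega⟩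
  · exact ⟨-1, by omega⟩

theorem mukaiEquiv_evenVec_of_ne_zero (hnorm : c ^ 2 - 1 = 2 * (u ⬝ᵥ U3G *ᵥ u)) (hu : u 3 ≠ 0) :
    MukaiEquiv (evenVec u c) (evenVec 0 1) := by
  induction hm : (u 3).natAbs using Nat.strong_induction_on generalizing u c with
  | _ m ih =>
    obtain ⟨v, d, huv, hv3, hv, hd⟩ := exists_mukaiEquiv_reduced hu c
    have hvnorm := huv.sq_sub_one_eq hnorm
    refine huv.trans ?_
    by_cases hzero : ∀ i, i ≠ 3 → v i = 0
    · exact mukaiEquiv_evenVec_of_eq_zero hvnorm hzero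
    · obtain ⟨r, hr, hpivot⟩ := exists_isPivot_ne_zero hzero
      have hlt := hpivot.abs_lt (hv3 ▸ hu) hv hd hvnorm
      obtain ⟨k, hk, hk_lt⟩ := exists_sub_mul_ne_zero_natAbs_lt hr hlt
      obtain ⟨w, hvw, hw3⟩ := hpivot.exists_mukaiEquiv d k
      rw [← hw3] at hk hk_lt
      exact hvw.trans (ih _ (by rwa [← hm, ← hv3]) (hvw.sq_sub_one_eq hvnorm) hk rfl)

theorem mukaiEquiv_evenVec (hnorm : c ^ 2 - 1 = 2 * (u ⬝ᵥ U3G *ᵥ u)) :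
    MukaiEquiv (evenVec u c) (evenVec 0 1) := by
  by_cases hu3 : u 3 = 0
  · by_cases hzero : ∀ i, i ≠ 3 → u i = 0
    · exact mukaiEquiv_evenVec_of_eq_zero hnorm hzero
    · obtain ⟨r, hr, hpivot⟩ := exists_isPivot_ne_zero hzero
      obtain ⟨v, huv, hv3⟩ := hpivot.exists_mukaiEquiv c 1
      rw [hu3, zero_sub, one_mul] at hv3
      exact huv.trans (mukaiEquiv_evenVec_of_ne_zero (huv.sq_sub_one_eq hnorm)
        (hv3 ▸ neg_ne_zero.2 hr))
  · exact mukaiEquiv_evenVec_of_ne_zero hnorm hu3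

end Orbits

section Stabilizer

theorem evenVec_zero_one : evenVec 0 1 = Pi.single 6 1 := by
  decide

theorem evenVec_zero_one_dotProduct_G7_mulVec (x : Fin 7 → ℤ) :
    evenVec 0 1 ⬝ᵥ G7 *ᵥ x = -2 * x 6 := by
  rw [evenVec_zero_one, single_one_dotProduct]
  simp [G7, mulVec, dotProduct, Fin.sum_univ_succ]

theorem IsIsometry.two_dvd_dotProduct {g : (Matrix (Fin 7) (Fin 7) ℤ)ˣ}
    (hg : IsIsometry G7 g.val) (x : Fin 7 → ℤ) :
    2 ∣ (g.val *ᵥ evenVec 0 1) ⬝ᵥ G7 *ᵥ x := by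
  have hx : x = g.val *ᵥ (g⁻¹.val *ᵥ x) := by
    rw [mulVec_mulVec, Units.mul_inv, one_mulVec]
  rw [hx, hg.dotProduct_mulVec, evenVec_zero_one_dotProduct_G7_mulVec]
  exact (dvd_neg.2 dvd_rfl).mul_right _

theorem U3G_mul_self : U3G * U3G = 1 := by
  decide

theorem exists_eq_evenVec {v : Fin 7 → ℤ} (hv : ∀ x, 2 ∣ v ⬝ᵥ G7 *ᵥ x) :
    ∃ u c, v = evenVec u c := by
  have heven (i : Fin 6) : 2 ∣ v i.castSucc := by
    have hi := hv (toK (U3G *ᵥ Pi.single i 1) 0)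
    rwa [← toK_castSucc_last v, toK_dotProduct_G7_mulVec_toK, mulVec_mulVec, U3G_mul_self,
      one_mulVec, dotProduct_single_one, mul_zero, sub_zero] at hi
  choose u hu using heven
  refine ⟨u, v 6, ?_⟩
  rw [evenVec, ← toK_castSucc_last v]
  exact congrArg₂ toK (funext hu) rfl

theorem IsIsometry.exists_mulVec_eq_evenVec {g : (Matrix (Fin 7) (Fin 7) ℤ)ˣ}
    (hg : IsIsometry G7 g.val) :
    ∃ u c, g.val *ᵥ evenVec 0 1 = evenVec u c ∧ c ^ 2 - 1 = 2 * (u ⬝ᵥ U3G *ᵥ u) := by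
  obtain ⟨u, c, hgu⟩ := exists_eq_evenVec hg.two_dvd_dotProduct
  have hnorm := hg.dotProduct_mulVec (evenVec 0 1) (evenVec 0 1)
  rw [hgu, evenVec_dotProduct_G7_mulVec, evenVec_dotProduct_G7_mulVec, zero_dotProduct] at hnorm
  exact ⟨u, c, hgu, by linarith⟩

theorem IsIsometry.eq_emb7 {k : Matrix (Fin 7) (Fin 7) ℤ} (hk : IsIsometry G7 k)
    (hfix : k *ᵥ evenVec 0 1 = evenVec 0 1) :
    k = emb7 (k.submatrix Fin.castSucc Fin.castSucc) := by
  have hcol (i : Fin 7) : k i 6 = evenVec 0 1 i := by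
    rw [← hfix, evenVec_zero_one, mulVec_single_one, col_apply]
  have hrow (j : Fin 7) : k 6 j = (Pi.single j 1 : Fin 7 → ℤ) 6 := by
    have hpair := hk.dotProduct_mulVec (evenVec 0 1) (Pi.single j 1)
    rw [hfix, evenVec_zero_one_dotProduct_G7_mulVec, evenVec_zero_one_dotProduct_G7_mulVec,
      mulVec_single_one, col_apply] at hpair
    linarith
  ext i j
  have hi := hcol i
  have hj := hrow j
  fin_cases i <;> fin_cases j <;> first | rfl | exact hi | exact hj

theorem det_emb7 (h : Matrix (Fin 6) (Fin 6) ℤ) : (emb7 h).det = h.det := by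
  have hblocks : emb7 h =
      reindex finSumFinEquiv finSumFinEquiv (fromBlocks h 0 0 (1 : Matrix (Fin 1) (Fin 1) ℤ)) := by
    ext i j
    fin_cases i <;> fin_cases j <;> rfl
  rw [hblocks, det_reindex_self, det_fromBlocks_zero₂₁, det_one, mul_one]

/-- The matrix of the inclusion of `U³` into `K`. -/
def inclK : Matrix (Fin 7) (Fin 6) ℤ :=
  (1 : Matrix (Fin 7) (Fin 7) ℤ).submatrix id Fin.castSucc

theorem inclK_mulVec (u : Fin 6 → ℤ) : inclK *ᵥ u = toK u 0 := by
  ext i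
  fin_cases i <;> simp [inclK, toK, mulVec, dotProduct, Fin.sum_univ_succ, one_apply]

theorem emb7_mul_inclK (h : Matrix (Fin 6) (Fin 6) ℤ) : emb7 h * inclK = inclK * h :=
  ext_iff_mulVec.2 fun u => by
    rw [← mulVec_mulVec, ← mulVec_mulVec, inclK_mulVec, inclK_mulVec, emb7_mulVec_toK]

theorem inclK_transpose_mul_mul : inclKᵀ * G7 * inclK = U3G := by
  decide

theorem inclK_posSemidef : (inclK * U3G * inclKᵀ - G7)ᴿ.PosSemidef := by
  have hdiag : inclK * U3G * inclKᵀ - G7 = diagonal ![0, 0, 0, 0, 0, 0, 2] := by decide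
  rw [hdiag, diagonal_map Int.cast_zero]
  refine PosSemidef.diagonal fun i => ?_
  fin_cases i <;> simp

theorem mem_mukaiGenerators_of_fixes {k : (Matrix (Fin 7) (Fin 7) ℤ)ˣ}
    (hk : k ∈ specialOrthogonalPlus G7 G7_isSymm) (hfix : k.val *ᵥ evenVec 0 1 = evenVec 0 1) :
    k ∈ mukaiGenerators := by
  obtain ⟨hiso, hdet, hor⟩ := hk
  have hemb := hiso.eq_emb7 hfix
  rw [hemb] at hiso hdet hor
  exact Or.inl ⟨_, hiso.of_intertwining inclK_transpose_mul_mul (emb7_mul_inclK _),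
    (det_emb7 _).symm.trans hdet,
    hor.of_intertwining inclK_transpose_mul_mul inclK_posSemidef (emb7_mul_inclK _), hemb⟩

theorem specialOrthogonalPlus_le_closure :
    specialOrthogonalPlus G7 G7_isSymm ≤ Subgroup.closure mukaiGenerators := by
  intro g hg
  obtain ⟨u, c, hgu, hnorm⟩ := hg.1.exists_mulVec_eq_evenVec
  obtain ⟨γ, hγ, hγu⟩ := mukaiEquiv_evenVec hnorm
  have hfix : (γ * g).val *ᵥ evenVec 0 1 = evenVec 0 1 := by
    rw [Units.val_mul, ← mulVec_mulVec, hgu, hγu]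
  have hmem := Subgroup.subset_closure (mem_mukaiGenerators_of_fixes (mul_mem hγ.2 hg) hfix)
  exact (Subgroup.mul_mem_cancel_left _ hγ.1).1 hmem

end Stabilizer

/-- The subgroup `G` of `O((1,0,-1)^⊥)` of the theorem is generated by:
(i) the restrictions to `(1,0,-1)^⊥` of the isometries of the Mukai lattice `Λ` acting as an
element of `SO⁺(U³)` on `U³` and as the identity on `ℤ ⊕ ℤ`; and (ii) the compositions
`φ⁻¹ ∘ ĝ ∘ φ`, where `ĝ` is the restriction to `(0,e+f,1)^⊥` of an isometry of `Λ` acting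
as an element of `SO⁺(U³)` fixing `e+f` on `U³` and as the identity on `ℤ ⊕ ℤ`.
Then `SO⁺((1,0,-1)^⊥) ⊆ G`.  (The element `φ⁻¹ ∘ ĝ ∘ φ` of `O(K)` is characterized by the
matrix equation `PhiM * g = emb8 h * PhiM`.) -/
theorem stmt_15 :
    {g : (Matrix (Fin 7) (Fin 7) ℤ)ˣ |
        IsIsometry G7 (g : Matrix (Fin 7) (Fin 7) ℤ) ∧
          (g : Matrix (Fin 7) (Fin 7) ℤ).det = 1 ∧
          OrientPres G7 (g : Matrix (Fin 7) (Fin 7) ℤ)} ⊆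
      (Subgroup.closure
        ({g : (Matrix (Fin 7) (Fin 7) ℤ)ˣ |
            ∃ h : Matrix (Fin 6) (Fin 6) ℤ,
              IsIsometry U3G h ∧ h.det = 1 ∧ OrientPres U3G h ∧
              (g : Matrix (Fin 7) (Fin 7) ℤ) = emb7 h} ∪
         {g : (Matrix (Fin 7) (Fin 7) ℤ)ˣ |
            ∃ h : Matrix (Fin 6) (Fin 6) ℤ,
              IsIsometry U3G h ∧ h.det = 1 ∧ OrientPres U3G h ∧
              h *ᵥ ![1, 1, 0, 0, 0, 0] = ![1, 1, 0, 0, 0, 0] ∧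
              PhiM * (g : Matrix (Fin 7) (Fin 7) ℤ) = emb8 h * PhiM}) :
        Set ((Matrix (Fin 7) (Fin 7) ℤ)ˣ)) := by
  exact specialOrthogonalPlus_le_closure
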